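/- Let f be a rational map of degree at least 2 with Julia set J. Then {x ∈ J : χ̄(x) > α⁺} = ∅. Moreover, if J does not contain any critical point of f, then also {x ∈ J : χ̲(x) < α⁻} = ∅. -/

import Mathlib

open Filter Set Metric MeasureTheory Topology
open scoped ENNReal NNReal

noncomputable section

/-! ### The Riemann sphere with the chordal (spherical) metric -/

/-- The Riemann sphere `ℂ ∪ {∞}`. -/
structure RSphere : Type where
  val : Option ℂ

namespace RSphere

/-- The inclusion of `ℂ` into the Riemann sphere. -/
def ofC (z : ℂ) : RSphere := ⟨some z⟩

/-- The point at infinity. -/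
def infty : RSphere := ⟨none⟩

/-- Case elimination on a point of the Riemann sphere. -/
def elim {α : Sort*} (x : RSphere) (i : α) (h : ℂ → α) : α := Option.elim x.val i h

/-- Stereographic embedding of the Riemann sphere onto the round unit sphere in
`ℝ³ = ℂ ×₂ ℝ`.  It induces the chordal (spherical) metric on `RSphere`. -/
def embed (x : RSphere) : WithLp 2 (ℂ × ℝ) :=
  elim x ((WithLp.equiv 2 (ℂ × ℝ)).symm (0, 1))
    fun z => (WithLp.equiv 2 (ℂ × ℝ)).symm
      (((2 / (‖z‖ ^ 2 + 1)) : ℝ) • z, (‖z‖ ^ 2 - 1) / (‖z‖ ^ 2 + 1))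

/-- Inverse of the stereographic embedding. -/
def unembed (v : WithLp 2 (ℂ × ℝ)) : RSphere :=
  if (WithLp.equiv 2 (ℂ × ℝ) v).2 = 1 then infty
  else ofC ((1 - (WithLp.equiv 2 (ℂ × ℝ) v).2)⁻¹ • (WithLp.equiv 2 (ℂ × ℝ) v).1)

lemma leftInverse_unembed : Function.LeftInverse unembed embed := by
  rintro ⟨x⟩
  cases x with
  | none =>
      simp [embed, unembed, elim, infty]
  | some z =>
      have h1 : (0 : ℝ) < ‖z‖ ^ 2 + 1 := by positivity
      have ht : (‖z‖ ^ 2 - 1) / (‖z‖ ^ 2 + 1) ≠ 1 := by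
        intro h
        rw [div_eq_one_iff_eq h1.ne'] at h
        linarith
      simp only [embed, unembed, elim, Option.elim, Equiv.apply_symm_apply, ht, if_false, ofC]
      congr 2
      rw [smul_smul]
      have h2 : 1 - (‖z‖ ^ 2 - 1) / (‖z‖ ^ 2 + 1) = 2 / (‖z‖ ^ 2 + 1) := by
        field_simp
        ring
      rw [h2]
      rw [inv_mul_cancel₀ (by positivity), one_smul]

lemma embed_injective : Function.Injective embed := leftInverse_unembed.injective

/-- The chordal metric on the Riemann sphere, induced by the stereographic embedding
onto the round unit sphere in Euclidean 3-space. -/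
instance : MetricSpace RSphere := MetricSpace.induced embed embed_injective inferInstance

instance : MeasurableSpace RSphere := borel RSphere

instance : BorelSpace RSphere := ⟨rfl⟩

/-- Reading off a finite point (junk value `0` at `∞`). -/
def toC (x : RSphere) : ℂ := elim x 0 id

/-- The involution `z ↦ 1/z` of the Riemann sphere. -/
def inv (x : RSphere) : RSphere :=
  elim x (ofC 0) fun z => if z = 0 then infty else ofC z⁻¹

end RSphere

/-! ### Basic dynamical notions -/

/-- The norm of the derivative of `g` at `x`, measured in the spherical metric
(for a rational map this is the usual norm of the spherical derivative). -/
def sphDeriv (g : RSphere → RSphere) (x : RSphere) : ℝ :=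
  limsup (fun y => dist (g y) (g x) / dist y x) (𝓝[≠] x)

/-- The set of critical points. -/
def critSet (g : RSphere → RSphere) : Set RSphere := {x | sphDeriv g x = 0}

/-- The Fatou set: points having a neighbourhood on which the family of iterates is
equicontinuous (i.e. normal). -/
def fatouSet (f : RSphere → RSphere) : Set RSphere :=
  {x | ∃ U : Set RSphere, IsOpen U ∧ x ∈ U ∧ EquicontinuousOn (fun n : ℕ => f^[n]) U}

/-- The Julia set. -/
def juliaSet (f : RSphere → RSphere) : Set RSphere := (fatouSet f)ᶜ

/-- `f` is the rational map on the Riemann sphere given by the coprime pair of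
polynomials `p`, `q`. -/
structure IsRationalMap (f : RSphere → RSphere) (p q : Polynomial ℂ) : Prop where
  coprime : IsCoprime p q
  continuous : Continuous f
  eval : ∀ z : ℂ, q.eval z ≠ 0 → f (RSphere.ofC z) = RSphere.ofC (p.eval z / q.eval z)

/-- The degree of the rational map `p/q`. -/
def ratDeg (p q : Polynomial ℂ) : ℕ := max p.natDegree q.natDegree

/-- The lower Lyapunov exponent `χ̲(x) = liminf (1/n) log |(fⁿ)'(x)|`, as an extended real. -/
def lyapLower (f : RSphere → RSphere) (x : RSphere) : EReal :=
  liminf (fun n : ℕ => ((Real.log (sphDeriv (f^[n]) x) / n : ℝ) : EReal)) atTop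

/-- The upper Lyapunov exponent `χ̄(x) = limsup (1/n) log |(fⁿ)'(x)|`, as an extended real. -/
def lyapUpper (f : RSphere → RSphere) (x : RSphere) : EReal :=
  limsup (fun n : ℕ => ((Real.log (sphDeriv (f^[n]) x) / n : ℝ) : EReal)) atTop

/-- The level set `𝓛(a,b)` of points of the Julia set with lower exponent `a` and
upper exponent `b`. -/
def levelSet (f : RSphere → RSphere) (a b : EReal) : Set RSphere :=
  {x | x ∈ juliaSet f ∧ lyapLower f x = a ∧ lyapUpper f x = b}

/-- The set `𝓛̂(α,β)` of points of the Julia set with `χ̲ ≤ β`, `χ̄ ≥ α` and `χ̄ > 0`. -/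
def levelHat (f : RSphere → RSphere) (α β : ℝ) : Set RSphere :=
  {x | x ∈ juliaSet f ∧ lyapLower f x ≤ (β : EReal) ∧ (α : EReal) ≤ lyapUpper f x ∧
    0 < lyapUpper f x}

/-- Birkhoff sum `S_m φ = φ + φ∘g + ⋯ + φ∘g^{m-1}`. -/
def birkhoff (g : RSphere → RSphere) (φ : RSphere → ℝ) (m : ℕ) (x : RSphere) : ℝ :=
  ∑ k ∈ Finset.range m, φ (g^[k] x)

/-- An `(m,ε)`-separated finite subset of `Λ` for the map `g`. -/
def IsSepSet (g : RSphere → RSphere) (Λ : Set RSphere) (m : ℕ) (ε : ℝ)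
    (E : Finset RSphere) : Prop :=
  ↑E ⊆ Λ ∧ ∀ x ∈ E, ∀ y ∈ E, x ≠ y → ∃ k < m, ε ≤ dist (g^[k] x) (g^[k] y)

/-- Topological pressure of the potential `φ` for `g` restricted to `Λ`,
defined à la Bowen via `(m,ε)`-separated sets. -/
def pressureOn (g : RSphere → RSphere) (Λ : Set RSphere) (φ : RSphere → ℝ) : ℝ :=
  ⨆ ε : {ε : ℝ // 0 < ε}, limsup (fun m : ℕ =>
    Real.log (⨆ E : {E : Finset RSphere // IsSepSet g Λ m ε.1 E},
      ∑ x ∈ E.1, Real.exp (birkhoff g φ m x)) / m) atTop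

/-- `g` is uniformly expanding on `Λ`: `|(gᵐ)'(x)| ≥ c λᵐ` for some `c > 0`, `λ > 1`. -/
def ExpandingOn (g : RSphere → RSphere) (Λ : Set RSphere) : Prop :=
  ∃ c > (0 : ℝ), ∃ l : ℝ, 1 < l ∧ ∀ x ∈ Λ, ∀ m : ℕ, 1 ≤ m → c * l ^ m ≤ sphDeriv (g^[m]) x

/-- `Λ` is a repeller for `g`: a compact invariant isolated set. -/
def IsRepeller (g : RSphere → RSphere) (Λ : Set RSphere) : Prop :=
  IsCompact Λ ∧ g '' Λ = Λ ∧
    ∃ U : Set RSphere, IsOpen U ∧ Λ ⊆ U ∧ ∀ x, (∀ m : ℕ, g^[m] x ∈ U) → x ∈ Λ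

/-- Topological transitivity of `g` on `Λ`. -/
def TopTransOn (g : RSphere → RSphere) (Λ : Set RSphere) : Prop :=
  ∀ U V : Set RSphere, IsOpen U → IsOpen V → (U ∩ Λ).Nonempty → (V ∩ Λ).Nonempty →
    ∃ m : ℕ, (g^[m] '' (U ∩ Λ) ∩ V).Nonempty

/-- The topological pressure of `φ` with respect to `f` on its Julia set, given by
the supremum of the pressures on compact invariant uniformly expanding subsets of `J`. -/
def pressureTop (f : RSphere → RSphere) (φ : RSphere → ℝ) : ℝ :=
  ⨆ L : {L : Set RSphere //
      L.Nonempty ∧ L ⊆ juliaSet f ∧ IsCompact L ∧ f '' L = L ∧ ExpandingOn f L},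
    pressureOn f L.1 φ

/-- The pressure function `d ↦ P(φ_d)` where `φ_d = -d log|f'|`. -/
def pressFamily (f : RSphere → RSphere) (d : ℝ) : ℝ :=
  pressureTop f fun x => -d * Real.log (sphDeriv f x)

/-- `F(α) = α⁻¹ inf_d (Q(d) + dα)` associated with a pressure function `Q` (for `α ≠ 0`). -/
def specF (Q : ℝ → ℝ) (α : ℝ) : EReal :=
  ((α⁻¹ : ℝ) : EReal) * ⨅ d : ℝ, ((Q d + d * α : ℝ) : EReal)

/-- `F(0) = lim_{α → 0⁺} F(α)`. -/
def specF0 (Q : ℝ → ℝ) : EReal := limsup (fun α : ℝ => specF Q α) (𝓝[>] (0 : ℝ))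

/-- The full spectrum function `F` associated with a pressure function `Q`. -/
def specFext (Q : ℝ → ℝ) (α : ℝ) : EReal := if α = 0 then specF0 Q else specF Q α

/-- The Lyapunov spectrum function `F` of `f`. -/
def Ffun (f : RSphere → RSphere) (α : ℝ) : EReal := specFext (pressFamily f) α

/-- `α⁻ = lim_{d → +∞} -Q(d)/d` for a pressure function `Q`. -/
def alphaMinusOf (Q : ℝ → ℝ) : ℝ := limsup (fun d : ℝ => -Q d / d) atTop

/-- `α⁺ = lim_{d → -∞} -Q(d)/d` for a pressure function `Q`. -/
def alphaPlusOf (Q : ℝ → ℝ) : ℝ := limsup (fun d : ℝ => -Q d / d) atBot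

/-- `α⁻` for the map `f`. -/
def alphaMinus (f : RSphere → RSphere) : ℝ := alphaMinusOf (pressFamily f)

/-- `α⁺` for the map `f`. -/
def alphaPlus (f : RSphere → RSphere) : ℝ := alphaPlusOf (pressFamily f)

/-- The Lyapunov exponent `χ(μ) = ∫ log|g'| dμ` of a measure. -/
def lyapMeas (g : RSphere → RSphere) (μ : Measure RSphere) : ℝ :=
  ∫ x, Real.log (sphDeriv g x) ∂μ

/-- `α⁻` as the infimum of Lyapunov exponents of invariant probability measures on `J`. -/
def alphaMinusMeas (f : RSphere → RSphere) : ℝ :=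
  sInf {r : ℝ | ∃ μ : Measure RSphere, IsProbabilityMeasure μ ∧ MeasurePreserving f μ μ ∧
    μ (juliaSet f)ᶜ = 0 ∧ r = lyapMeas f μ}

/-- `α⁺` as the supremum of Lyapunov exponents of invariant probability measures on `J`. -/
def alphaPlusMeas (f : RSphere → RSphere) : ℝ :=
  sSup {r : ℝ | ∃ μ : Measure RSphere, IsProbabilityMeasure μ ∧ MeasurePreserving f μ μ ∧
    μ (juliaSet f)ᶜ = 0 ∧ r = lyapMeas f μ}

/-- The maximal distortion `sup_{x,y ∈ Z} |g'(x)|/|g'(y)|` of `g` on `Z`. -/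
def distortionOn (g : RSphere → RSphere) (Z : Set RSphere) : ℝ :=
  sSup {r : ℝ | ∃ x ∈ Z, ∃ y ∈ Z, r = sphDeriv g x / sphDeriv g y}

/-- Conical points. -/
def IsConical (f : RSphere → RSphere) (x : RSphere) : Prop :=
  ∃ r : ℝ, 0 < r ∧ ∃ K : ℝ, ∃ n : ℕ → ℕ, StrictMono n ∧ ∃ U : ℕ → Set RSphere,
    ∀ i, U i ∈ 𝓝 x ∧ ball (f^[n i] x) r ⊆ f^[n i] '' U i ∧ distortionOn (f^[n i]) (U i) ≤ K

/-- A non-immediately postcritical point: there is a backward orbit through it that is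
dense in the Julia set and avoids the critical points. -/
def NonImmPostCrit (f : RSphere → RSphere) (x : RSphere) : Prop :=
  ∃ b : ℕ → RSphere, b 0 = x ∧ (∀ n, f (b (n + 1)) = b n) ∧
    juliaSet f ⊆ closure (Set.range b) ∧ ∀ n, b n ∉ critSet f

/-- `f` is exceptional: there is a finite nonempty set `Σ_f` with `f⁻¹(Σ_f) \ Crit = Σ_f`. -/
def IsExceptional (f : RSphere → RSphere) : Prop :=
  ∃ S : Set RSphere, S.Finite ∧ S.Nonempty ∧ f ⁻¹' S \ critSet f = S

/-- The largest exceptional set `Σ` of `f`. -/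
def maxExceptional (f : RSphere → RSphere) : Set RSphere :=
  ⋃₀ {S : Set RSphere | S.Finite ∧ S.Nonempty ∧ f ⁻¹' S \ critSet f = S}

/-- `0` not being exceptional, or having exceptional set away from the Julia set. -/
def GoodExc (f : RSphere → RSphere) : Prop :=
  ¬ IsExceptional f ∨ maxExceptional f ∩ juliaSet f = ∅

/-- A parabolic periodic point at a finite point `z`: a periodic point whose multiplier
is a root of unity. -/
def IsParabolicFix (g : RSphere → RSphere) (z : ℂ) : Prop :=
  ∃ m : ℕ, 0 < m ∧ g^[m] (RSphere.ofC z) = RSphere.ofC z ∧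
    ∃ lam : ℂ, (∃ k : ℕ, 0 < k ∧ lam ^ k = 1) ∧
      HasDerivAt (fun w => RSphere.toC (g^[m] (RSphere.ofC w))) lam z

/-- A parabolic periodic point of `f` (at a finite point, or at `∞` read in the chart `1/z`). -/
def IsParabolic (f : RSphere → RSphere) (x : RSphere) : Prop :=
  (∃ z : ℂ, x = RSphere.ofC z ∧ IsParabolicFix f z) ∨
  (x = RSphere.infty ∧ IsParabolicFix (fun y => RSphere.inv (f (RSphere.inv y))) 0)

/-- A recurrent point. -/
def IsRecurrentPt (f : RSphere → RSphere) (x : RSphere) : Prop :=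
  ∃ n : ℕ → ℕ, StrictMono n ∧ Tendsto (fun i => f^[n i] x) atTop (𝓝 x)

/-! ### Graph directed systems and expanding Cantor repellers -/

/-- A graph directed system (GDS) satisfying the strong separation condition with
respect to the map `g`. -/
structure GDS (g : RSphere → RSphere) where
  /-- number of vertices -/
  n : ℕ
  npos : 0 < n
  /-- the open domains -/
  U : Fin n → Set RSphere
  /-- the admissible edges -/
  edge : Fin n → Fin n → Prop
  /-- the inverse branches -/
  br : Fin n → Fin n → RSphere → RSphere
  isOpen : ∀ k, IsOpen (U k)
  isConnected : ∀ k, IsConnected (U k)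
  disjClosure : ∀ k l, k ≠ l → closure (U k) ∩ closure (U l) = ∅
  mapsTo : ∀ k l, edge k l → Set.MapsTo (br k l) (closure (U l)) (U k)
  isBranch : ∀ k l, edge k l → ∀ x ∈ closure (U l), g (br k l x) = x
  bddDistortion : ∃ C : ℝ, ∀ k l, edge k l → distortionOn (br k l) (closure (U l)) ≤ C

/-- The cylinder sets of depth `m` of a GDS. -/
def gdsCyl {g : RSphere → RSphere} (G : GDS g) : ℕ → Set RSphere
  | 0 => ⋃ k, G.U k
  | m + 1 => ⋃ (k : Fin G.n) (l : Fin G.n) (_ : G.edge k l),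
      G.br k l '' (gdsCyl G m ∩ G.U l)

/-- The limit set of a GDS. -/
def gdsLimit {g : RSphere → RSphere} (G : GDS g) : Set RSphere := ⋂ m, gdsCyl G m

/-- An expanding Cantor repeller (ECR) for `g`: a uniformly expanding repeller which is
the limit set of a GDS satisfying the strong separation condition, with `g(Λ) = Λ`. -/
def IsECR (g : RSphere → RSphere) (Λ : Set RSphere) : Prop :=
  ExpandingOn g Λ ∧ IsRepeller g Λ ∧ ∃ G : GDS g, gdsLimit G = Λ

/-- A Cantor set: compact, perfect and totally disconnected. -/
def IsCantorSet (s : Set RSphere) : Prop :=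
  IsCompact s ∧ Perfect s ∧ IsTotallyDisconnected s

/-! ### Entropy, equilibrium states and dimensions -/

/-- The entropy of a countable partition (given by the fibers of `p`). -/
def partEntropy {ι : Type} [Countable ι] (μ : Measure RSphere) (p : RSphere → ι) : ℝ :=
  ∑' i : ι, Real.negMulLog (μ (p ⁻¹' {i})).toReal

/-- Measure-theoretic (Kolmogorov–Sinai) entropy of `T` with respect to `μ`:
supremum over finite measurable partitions of the exponential growth rate of the
entropies of the dynamical refinements. -/
def entropyOf (T : RSphere → RSphere) (μ : Measure RSphere) : ℝ :=
  ⨆ p : {p : RSphere → ℕ // Measurable p ∧ (Set.range p).Finite},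
    ⨅ n : {n : ℕ // 0 < n},
      partEntropy μ (fun x => fun k : Fin n.1 => p.1 (T^[(k : ℕ)] x)) / (n.1 : ℝ)

/-- An equilibrium state for the potential `φ` with respect to `g` restricted to `Λ`. -/
def IsEquilibrium (g : RSphere → RSphere) (Λ : Set RSphere) (φ : RSphere → ℝ)
    (μ : Measure RSphere) : Prop :=
  IsProbabilityMeasure μ ∧ μ Λᶜ = 0 ∧ MeasurePreserving g μ μ ∧
    entropyOf g μ + ∫ x, φ x ∂μ = pressureOn g Λ φ

/-- The Hausdorff dimension of a measure: the infimum of the Hausdorff dimensions of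
sets of full measure. -/
def dimHMeasure (μ : Measure RSphere) : ℝ≥0∞ :=
  ⨅ (s : Set RSphere) (_ : μ sᶜ = 0), dimH s

/-- The minimal number of `ε`-balls needed to cover `s`. -/
def coverNum (s : Set RSphere) (ε : ℝ) : ℕ :=
  sInf {n : ℕ | ∃ t : Finset RSphere, t.card = n ∧ s ⊆ ⋃ x ∈ t, ball x ε}

/-- The upper box-counting dimension. -/
def upperBoxDim (s : Set RSphere) : ℝ :=
  limsup (fun n : ℕ => Real.log (coverNum s (1 / n)) / Real.log n) atTop

/-- The packing dimension, via countable covers and upper box dimensions. -/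
def dimP (s : Set RSphere) : ℝ≥0∞ :=
  ⨅ c : {c : ℕ → Set RSphere // s ⊆ ⋃ n, c n},
    ⨆ n : ℕ, ENNReal.ofReal (upperBoxDim (c.1 n))

/-- The connected component of `y` in `g⁻¹(B)`: the pull-back of `B` along the inverse
branch of `g` sending (the image of) `y` to `y`. -/
def invBranchSet (g : RSphere → RSphere) (B : Set RSphere) (y : RSphere) : Set RSphere :=
  connectedComponentIn (g ⁻¹' B) y

end

/-! ### Conformal derivatives in metric spaces -/

/-- `g` scales distances near `x` by the factor `D`, up to a relative error tending to zero. -/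
def HasConfDeriv {X Y : Type*} [PseudoMetricSpace X] [PseudoMetricSpace Y]
    (g : X → Y) (D : ℝ) (x : X) : Prop :=
  ∀ ε > 0, ∀ᶠ p : X × X in 𝓝 (x, x),
    |dist (g p.1) (g p.2) - D * dist p.1 p.2| ≤ ε * dist p.1 p.2

namespace HasConfDeriv

variable {X Y Z : Type*} [MetricSpace X] [MetricSpace Y] [MetricSpace Z]

lemma id (x : X) : HasConfDeriv (fun y : X => y) 1 x := by
  intro ε hε
  filter_upwards with p
  simp only [one_mul, sub_self, abs_zero]
  positivity

lemma of_isometry {g : X → Y} (hg : Isometry g) (x : X) : HasConfDeriv g 1 x := by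
  intro ε hε
  filter_upwards with p
  simp only [one_mul, hg.dist_eq, sub_self, abs_zero]
  positivity

lemma eventually_dist_le {g : X → Y} {D C : ℝ} {x : X} (h : HasConfDeriv g D x) (hC : D < C) :
    ∀ᶠ p : X × X in 𝓝 (x, x), dist (g p.1) (g p.2) ≤ C * dist p.1 p.2 := by
  filter_upwards [h (C - D) (by linarith)] with p hp
  have := (abs_le.1 hp).2
  linarith

lemma continuousAt {g : X → Y} {D : ℝ} {x : X} (h : HasConfDeriv g D x) : ContinuousAt g x := by
  have h1 := h.eventually_dist_le (lt_add_one D)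
  have h2 : Tendsto (fun y : X => (y, x)) (𝓝 x) (𝓝 (x, x)) := by
    have : Continuous (fun y : X => (y, x)) := by fun_prop
    exact this.tendsto x
  have h3 := h2.eventually h1
  rw [ContinuousAt, tendsto_iff_dist_tendsto_zero]
  refine squeeze_zero' (Eventually.of_forall fun _ => dist_nonneg) h3 ?_
  have : Continuous (fun y : X => (D + 1) * dist y x) := by fun_prop
  simpa using this.tendsto x

lemma comp {g : Y → Z} {f : X → Y} {D E : ℝ} {x : X} (hg : HasConfDeriv g D (f x))
    (hf : HasConfDeriv f E x) : HasConfDeriv (fun y => g (f y)) (D * E) x := by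
  intro ε hε
  have hE : 0 < |E| + 1 := by positivity
  have hD : 0 < |D| + 1 := by positivity
  have hE' : E < |E| + 1 := by linarith [le_abs_self E]
  have hc : Tendsto (fun p : X × X => (f p.1, f p.2)) (𝓝 (x, x)) (𝓝 (f x, f x)) := by
    rw [nhds_prod_eq, nhds_prod_eq]
    exact hf.continuousAt.tendsto.prodMap hf.continuousAt.tendsto
  filter_upwards [hf.eventually_dist_le hE', hf (ε / 2 / (|D| + 1)) (by positivity),
    hc.eventually (hg (ε / 2 / (|E| + 1)) (by positivity))] with p h1 h2 h3
  set a := dist (g (f p.1)) (g (f p.2))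
  set b := dist (f p.1) (f p.2)
  set d := dist p.1 p.2 with hd
  have hd0 : 0 ≤ d := dist_nonneg
  calc |a - D * E * d| = |(a - D * b) + D * (b - E * d)| := by ring_nf
    _ ≤ |a - D * b| + |D| * |b - E * d| := by rw [← abs_mul]; exact abs_add_le _ _
    _ ≤ ε / 2 / (|E| + 1) * ((|E| + 1) * d) + (|D| + 1) * (ε / 2 / (|D| + 1) * d) := by
        gcongr
        · exact h3.trans (by gcongr)
        · linarith
    _ = ε * d := by field_simp; ring

lemma congr {g g' : X → Y} {D : ℝ} {x : X} (h : HasConfDeriv g D x) (he : g =ᶠ[𝓝 x] g') :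
    HasConfDeriv g' D x := by
  intro ε hε
  have := he.prodMk_nhds he
  filter_upwards [h ε hε, this] with p hp hq
  rwa [← hq.1, ← hq.2]

lemma iterate {f : X → X} {D : X → ℝ} (h : ∀ x, HasConfDeriv f (D x) x) (n : ℕ) (x : X) :
    HasConfDeriv f^[n] (∏ i ∈ Finset.range n, D (f^[i] x)) x := by
  induction n with
  | zero => simpa using (show HasConfDeriv f^[0] 1 x from HasConfDeriv.id x)
  | succ n ih =>
    rw [Finset.prod_range_succ, mul_comm]
    have := (h (f^[n] x)).comp ih
    rw [Function.iterate_succ']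
    exact this

lemma tendsto_ratio {g : X → Y} {D : ℝ} {x : X} (h : HasConfDeriv g D x) :
    Tendsto (fun y => dist (g y) (g x) / dist y x) (𝓝[≠] x) (𝓝 D) := by
  rw [Metric.tendsto_nhds]
  intro ε hε
  have h2 : Tendsto (fun y : X => (y, x)) (𝓝[≠] x) (𝓝 (x, x)) := by
    have : Continuous (fun y : X => (y, x)) := by fun_prop
    exact (this.tendsto x).mono_left nhdsWithin_le_nhds
  filter_upwards [h2.eventually (h (ε / 2) (by positivity)), self_mem_nhdsWithin] with y hy hne
  have hd : 0 < dist y x := dist_pos.2 hne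
  have : dist (g y) (g x) / dist y x - D = (dist (g y) (g x) - D * dist y x) / dist y x := by
    field_simp
  rw [Real.dist_eq, this, abs_div, abs_of_pos hd, div_lt_iff₀ hd]
  nlinarith

lemma nonneg {g : X → Y} {D : ℝ} {x : X} [(𝓝[≠] x).NeBot] (h : HasConfDeriv g D x) : 0 ≤ D :=
  ge_of_tendsto' h.tendsto_ratio fun _ => by positivity

lemma continuous_deriv [∀ x : X, (𝓝[≠] x).NeBot] {f : X → Y} {D : X → ℝ}
    (h : ∀ x, HasConfDeriv f (D x) x) : Continuous D := by
  rw [continuous_iff_continuousAt]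
  intro x
  rw [ContinuousAt, Metric.tendsto_nhds]
  intro ε hε
  have h1 := eventually_eventually_nhds.2 (h x (ε / 4) (by positivity))
  have h2 : Tendsto (fun y : X => (y, y)) (𝓝 x) (𝓝 (x, x)) := by
    have : Continuous (fun y : X => (y, y)) := by fun_prop
    exact this.tendsto x
  filter_upwards [h2.eventually h1] with y hy
  have h3 : Tendsto (fun z : X => (z, y)) (𝓝[≠] y) (𝓝 (y, y)) := by
    have : Continuous (fun z : X => (z, y)) := by fun_prop
    exact (this.tendsto y).mono_left nhdsWithin_le_nhds
  obtain ⟨z, hz, hz1, hz2⟩ := ((h3.eventually hy).and ((h3.eventually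
    (h y (ε / 4) (by positivity))).and self_mem_nhdsWithin)).exists
  have hd : 0 < dist z y := dist_pos.2 hz2
  rw [abs_le] at hz hz1
  rw [Real.dist_eq]
  have : |D y - D x| ≤ ε / 2 := by
    rw [abs_le]
    constructor <;> by_contra! hcon <;> nlinarith
  linarith

/-- A strictly differentiable complex function has a conformal derivative. -/
lemma of_hasStrictDerivAt {g : ℂ → ℂ} {g' z : ℂ} (h : HasStrictDerivAt g g' z) :
    HasConfDeriv g ‖g'‖ z := by
  intro ε hε
  filter_upwards [h.isLittleO.def hε] with p hp
  rw [dist_eq_norm, dist_eq_norm, ← norm_mul]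
  refine (abs_norm_sub_norm_le _ _).trans ?_
  simpa [mul_comm] using hp

end HasConfDeriv

/-- If some iterate has conformal derivative less than one along a compact forward invariant set,
the iterates are equicontinuous near that set. -/
lemma exists_equicontinuousOn_of_confDeriv_lt_one {X : Type*} [MetricSpace X] [CompactSpace X]
    {f : X → X} (hf : Continuous f) {J : Set X} (hJc : IsClosed J) (hJ : MapsTo f J J)
    {N : ℕ} (hN : 0 < N) {E : X → ℝ} (hE : ∀ x ∈ J, HasConfDeriv f^[N] (E x) x)
    (hE1 : ∀ x ∈ J, E x < 1) {x : X} (hx : x ∈ J) :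
    ∃ U : Set X, IsOpen U ∧ x ∈ U ∧ EquicontinuousOn (fun n : ℕ => f^[n]) U := by
  have h1 : ∀ y ∈ J, ∃ r > 0, ∀ a ∈ ball y r, ∀ b ∈ ball y r,
      dist (f^[N] a) (f^[N] b) ≤ dist a b := by
    intro y hy
    have := (hE y hy).eventually_dist_le (hE1 y hy)
    rw [Metric.eventually_nhds_iff] at this
    obtain ⟨r, hr, h⟩ := this
    refine ⟨r, hr, fun a ha b hb => ?_⟩
    simpa using @h (a, b) (by simpa [Prod.dist_eq] using ⟨ha, hb⟩)
  choose! r hr hrb using h1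
  obtain ⟨δ, hδ, hδJ⟩ := lebesgue_number_lemma_of_metric (c := fun y : J => ball (y : X) (r y))
    hJc.isCompact (fun _ => isOpen_ball)
    (fun y hy => mem_iUnion.2 ⟨⟨y, hy⟩, mem_ball_self (hr y hy)⟩)
  have h2 : ∀ y ∈ J, ∀ a ∈ ball y δ, ∀ b ∈ ball y δ,
      dist (f^[N] a) (f^[N] b) ≤ dist a b := by
    intro y hy a ha b hb
    obtain ⟨i, hi⟩ := hδJ y hy
    exact hrb i i.2 a (hi ha) b (hi hb)
  have hxk : ∀ k, (f^[N])^[k] x ∈ J := by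
    intro k
    exact (hJ.iterate N).iterate k hx
  have h3 : ∀ k, ∀ a ∈ ball x δ, (f^[N])^[k] a ∈ ball ((f^[N])^[k] x) δ := by
    intro k
    induction k with
    | zero => simp
    | succ k ih =>
      intro a ha
      rw [Function.iterate_succ', Function.comp_apply, Function.comp_apply, mem_ball]
      exact (h2 _ (hxk k) _ (ih a ha) _ (mem_ball_self hδ)).trans_lt (ih a ha)
  have h4 : ∀ k, ∀ a ∈ ball x δ, ∀ b ∈ ball x δ,
      dist ((f^[N])^[k] a) ((f^[N])^[k] b) ≤ dist a b := by
    intro k a ha b hb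
    induction k with
    | zero => simp
    | succ k ih =>
      rw [Function.iterate_succ', Function.comp_apply, Function.comp_apply]
      exact (h2 _ (hxk k) _ (h3 k a ha) _ (h3 k b hb)).trans ih
  refine ⟨ball x δ, isOpen_ball, mem_ball_self hδ, fun y hy => ?_⟩
  intro V hV
  obtain ⟨ε, hε, hεV⟩ := Metric.mem_uniformity_dist.1 hV
  have h5 : ∀ᶠ s in 𝓝[>] (0 : ℝ), ∀ j ∈ Finset.range N, ∀ a b : X, dist a b < s →
      dist (f^[j] a) (f^[j] b) < ε := by
    rw [Filter.eventually_all_finset]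
    intro j _
    have hu := CompactSpace.uniformContinuous_of_continuous (hf.iterate j)
    obtain ⟨s, hs, h⟩ := Metric.uniformContinuous_iff.1 hu ε hε
    filter_upwards [Ioo_mem_nhdsGT hs] with t ht a b hab
    exact h (hab.trans ht.2)
  obtain ⟨s, hs, hs0⟩ := (h5.and self_mem_nhdsWithin).exists
  have h6 : ∀ᶠ z in 𝓝[ball x δ] y, z ∈ ball y s :=
    mem_nhdsWithin_of_mem_nhds (ball_mem_nhds y hs0)
  filter_upwards [h6, self_mem_nhdsWithin] with z hz hzx n
  apply hεV
  have hn : f^[n] = f^[n % N] ∘ (f^[N])^[n / N] := by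
    rw [← Function.iterate_mul, ← Function.iterate_add, Nat.mod_add_div]
  simp only [hn, Function.comp_apply]
  refine hs _ (Finset.mem_range.2 (Nat.mod_lt _ hN)) _ _ ((h4 _ _ hy _ hzx).trans_lt ?_)
  rw [dist_comm]; exact hz

/-! ### Empirical measures -/

section Empirical

variable {X : Type*} [MeasurableSpace X]

/-- The uniform probability measure on the first `n` points of the orbit of `x`. -/
noncomputable def empiricalMeasure (f : X → X) (n : ℕ) (x : X) : Measure X :=
  (n : ℝ≥0∞)⁻¹ • ∑ i ∈ Finset.range n, Measure.dirac (f^[i] x)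

lemma isProbabilityMeasure_empiricalMeasure (f : X → X) {n : ℕ} (hn : 0 < n) (x : X) :
    IsProbabilityMeasure (empiricalMeasure f n x) := by
  constructor
  simp [empiricalMeasure, ENNReal.inv_mul_cancel (Nat.cast_ne_zero.2 hn.ne')]

variable [MetricSpace X] [BorelSpace X]

lemma integral_empiricalMeasure (f : X → X) (n : ℕ) (x : X) (g : X → ℝ) :
    ∫ y, g y ∂(empiricalMeasure f n x) = (n : ℝ)⁻¹ * ∑ i ∈ Finset.range n, g (f^[i] x) := by
  rw [empiricalMeasure, integral_smul_measure, integral_finsetSum_measure]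
  · simp
  · intro i _
    exact integrable_dirac (by simp)

lemma empiricalMeasure_apply_of_mapsTo {f : X → X} {J : Set X} (hJc : IsClosed J)
    (hJ : MapsTo f J J) (n : ℕ) {x : X} (hx : x ∈ J) : empiricalMeasure f n x Jᶜ = 0 := by
  simp only [empiricalMeasure, Measure.smul_apply, Measure.finsetSum_apply, smul_eq_mul]
  rw [Finset.sum_eq_zero, mul_zero]
  intro i _
  rw [Measure.dirac_apply' _ hJc.measurableSet.compl]
  simpa using hJ.iterate i hx

/-- Krylov–Bogolyubov: empirical measures along orbits in a closed forward invariant set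
accumulate at invariant measures on that set. -/
lemma exists_invariant_limit [CompactSpace X] {f : X → X} (hf : Continuous f) {J : Set X}
    (hJc : IsClosed J) (hJ : MapsTo f J J) {n : ℕ → ℕ} (hn0 : ∀ k, 0 < n k)
    (hn : Tendsto n atTop atTop) {x : ℕ → X} (hx : ∀ k, x k ∈ J) :
    ∃ (μ : Measure X) (L : Filter ℕ), L.NeBot ∧ L ≤ atTop ∧ IsProbabilityMeasure μ ∧
      MeasurePreserving f μ μ ∧ μ Jᶜ = 0 ∧ ∀ g : X → ℝ, Continuous g →
        Tendsto (fun k => (n k : ℝ)⁻¹ * ∑ i ∈ Finset.range (n k), g (f^[i] (x k))) L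
          (𝓝 (∫ y, g y ∂μ)) := by
  let P : ℕ → ProbabilityMeasure X := fun k =>
    ⟨empiricalMeasure f (n k) (x k), isProbabilityMeasure_empiricalMeasure f (hn0 k) (x k)⟩
  obtain ⟨μ, -, hμ⟩ := isCompact_univ.ultrafilter_le_nhds
    ((Ultrafilter.of (atTop : Filter ℕ)).map P) (by simp)
  let L : Filter ℕ := Ultrafilter.of (atTop : Filter ℕ)
  have hL : L ≤ atTop := Ultrafilter.of_le _
  have hlim : Tendsto P L (𝓝 μ) := hμ
  have hintegral : ∀ g : X → ℝ, Continuous g →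
      Tendsto (fun k => (n k : ℝ)⁻¹ * ∑ i ∈ Finset.range (n k), g (f^[i] (x k))) L
          (𝓝 (∫ y, g y ∂(μ : Measure X))) := by
    intro g hg
    have := (ProbabilityMeasure.tendsto_iff_forall_integral_tendsto.1 hlim)
      (BoundedContinuousFunction.mkOfCompact ⟨g, hg⟩)
    refine this.congr fun k => ?_
    exact integral_empiricalMeasure f (n k) (x k) g
  refine ⟨μ, L, inferInstance, hL, inferInstance, ⟨hf.measurable, ?_⟩, ?_, hintegral⟩
  · have : IsProbabilityMeasure (Measure.map f (μ : Measure X)) :=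
      Measure.isProbabilityMeasure_map hf.aemeasurable
    refine ext_of_forall_integral_eq_of_IsFiniteMeasure fun g => ?_
    rw [integral_map hf.aemeasurable g.continuous.aestronglyMeasurable]
    have h1 := hintegral (fun y => g (f y)) (g.continuous.comp hf)
    have h2 := hintegral g g.continuous
    have h3 : Tendsto (fun k => (n k : ℝ)⁻¹ * (2 * ‖g‖)) L (𝓝 0) := by
      have : Tendsto (fun k => (n k : ℝ)⁻¹) L (𝓝 0) :=
        (tendsto_inv_atTop_zero.comp (tendsto_natCast_atTop_atTop.comp hn)).mono_left hL
      simpa using this.mul_const (2 * ‖g‖)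
    have h4 : Tendsto (fun k => (n k : ℝ)⁻¹ * ∑ i ∈ Finset.range (n k), g (f (f^[i] (x k))) -
        (n k : ℝ)⁻¹ * ∑ i ∈ Finset.range (n k), g (f^[i] (x k))) L (𝓝 0) := by
      refine squeeze_zero_norm (fun k => ?_) h3
      rw [← mul_sub, ← Finset.sum_sub_distrib]
      have : ∑ i ∈ Finset.range (n k), (g (f (f^[i] (x k))) - g (f^[i] (x k))) =
          g (f^[n k] (x k)) - g (x k) := by
        have := Finset.sum_range_sub (fun i => g (f^[i] (x k))) (n k)
        simpa only [Function.iterate_succ_apply', Function.iterate_zero_apply] using this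
      rw [this, norm_mul, norm_inv, Real.norm_natCast]
      gcongr
      refine (norm_sub_le _ _).trans ?_
      linarith [g.norm_coe_le_norm (f^[n k] (x k)), g.norm_coe_le_norm (x k)]
    exact sub_eq_zero.1 (tendsto_nhds_unique (h1.sub h2) h4)
  · have h1 : ((μ : Measure X) Jᶜ) ≤ L.liminf fun k => (P k : Measure X) Jᶜ :=
      ProbabilityMeasure.le_liminf_measure_open_of_tendsto hlim hJc.isOpen_compl
    have h2 : (fun k => (P k : Measure X) Jᶜ) = fun _ => 0 := by
      funext k
      exact empiricalMeasure_apply_of_mapsTo hJc hJ (n k) (hx k)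
    rw [h2] at h1
    simpa using h1

/-- Upper semicontinuity of the Lyapunov exponent: if products of a nonnegative continuous
function `D` along arbitrarily long orbit pieces in `J` grow at rate at least `c`, then some
invariant measure on `J` satisfies `c ≤ ∫ log D`. -/
lemma exists_invariant_le_integral_log [CompactSpace X] {f : X → X} (hf : Continuous f)
    {J : Set X} (hJc : IsClosed J) (hJ : MapsTo f J J) {D : X → ℝ} (hD : Continuous D)
    (hD0 : ∀ x, 0 ≤ D x) {c : ℝ}
    (h : ∀ N : ℕ, ∃ n ≥ N, ∃ x ∈ J, Real.exp (c * n) ≤ ∏ i ∈ Finset.range n, D (f^[i] x)) :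
    ∃ μ : Measure X, IsProbabilityMeasure μ ∧ MeasurePreserving f μ μ ∧ μ Jᶜ = 0 ∧
      c ≤ ∫ x, Real.log (D x) ∂μ := by
  have h' : ∀ N : ℕ, ∃ n, N < n ∧ ∃ x ∈ J,
      Real.exp (c * n) ≤ ∏ i ∈ Finset.range n, D (f^[i] x) := fun N => h (N + 1)
  choose n hn x hx hprod using h'
  obtain ⟨μ, L, hLne, hL, hμ, hinv, hμJ, hlim⟩ := exists_invariant_limit hf hJc hJ
    (fun k => (Nat.zero_le k).trans_lt (hn k))
    (tendsto_atTop_mono (fun k => (hn k).le) tendsto_id) hx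
  refine ⟨μ, hμ, hinv, hμJ, ?_⟩
  obtain ⟨C, hC1, hC⟩ : ∃ C : ℝ, 1 ≤ C ∧ ∀ y, D y ≤ C := by
    obtain ⟨C, hC⟩ := (isCompact_range hD).bddAbove
    exact ⟨max C 1, le_max_right _ _, fun y => (hC ⟨y, rfl⟩).trans (le_max_left _ _)⟩
  -- the truncated potentials
  let φ : ℕ → X → ℝ := fun M y => Real.log (max (D y) (Real.exp (-M)))
  have hpos : ∀ M y, 0 < max (D y) (Real.exp (-(M : ℕ))) := fun M y =>
    lt_max_of_lt_right (Real.exp_pos _)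
  have hφc : ∀ M, Continuous (φ M) := fun M =>
    (hD.max continuous_const).log fun y => (hpos M y).ne'
  have hφC : ∀ M y, φ M y ≤ Real.log C := fun M y =>
    Real.log_le_log (hpos M y) (max_le (hC y)
      ((Real.exp_le_one_iff.2 (by simp)).trans hC1))
  have hφint : ∀ M, Integrable (φ M) μ := fun M =>
    (BoundedContinuousFunction.mkOfCompact ⟨φ M, hφc M⟩).integrable μ
  have hcφ : ∀ M, c ≤ ∫ y, φ M y ∂μ := by
    intro M
    refine ge_of_tendsto' (hlim (φ M) (hφc M)) fun k => ?_
    have hnk : (0 : ℝ) < n k := Nat.cast_pos.2 ((Nat.zero_le k).trans_lt (hn k))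
    rw [inv_mul_eq_div, le_div_iff₀ hnk]
    have : Real.exp (c * n k) ≤ ∏ i ∈ Finset.range (n k),
        max (D (f^[i] (x k))) (Real.exp (-M)) :=
      (hprod k).trans (Finset.prod_le_prod (fun _ _ => hD0 _) fun _ _ => le_max_left _ _)
    rw [← Real.log_prod fun i _ => (hpos M _).ne']
    exact (Real.le_log_iff_exp_le (Finset.prod_pos fun i _ => hpos M _)).2 this
  let F : ℕ → X → ℝ≥0∞ := fun M y => ENNReal.ofReal (Real.log C - φ M y)
  have hFm : ∀ M, Measurable (F M) := fun M =>
    (continuous_const.sub (hφc M)).measurable.ennreal_ofReal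
  have hφanti : ∀ y, Antitone fun M => φ M y := by
    intro y M M' hM
    refine Real.log_le_log (hpos M' y) (max_le_max le_rfl (Real.exp_le_exp.2 ?_))
    have : (M : ℝ) ≤ M' := Nat.cast_le.2 hM
    linarith
  have hFmono : Monotone F := fun M M' hM y =>
    ENNReal.ofReal_le_ofReal (sub_le_sub_left (hφanti y hM) _)
  have hFint : ∀ M, ∫⁻ y, F M y ∂μ ≤ ENNReal.ofReal (Real.log C - c) := by
    intro M
    have hi : Integrable (fun y => Real.log C - φ M y) μ := (integrable_const _).sub (hφint M)
    rw [← ofReal_integral_eq_lintegral_ofReal hi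
      (Eventually.of_forall fun y => sub_nonneg.2 (hφC M y))]
    apply ENNReal.ofReal_le_ofReal
    rw [integral_sub (integrable_const _) (hφint M)]
    have := hcφ M
    simp only [integral_const, probReal_univ, one_smul]
    linarith
  have hsup : ∫⁻ y, ⨆ M, F M y ∂μ ≤ ENNReal.ofReal (Real.log C - c) := by
    rw [lintegral_iSup hFm hFmono]
    exact iSup_le hFint
  have hDpos : ∀ᵐ y ∂μ, 0 < D y := by
    have := ae_lt_top (Measurable.iSup hFm) (hsup.trans_lt ENNReal.ofReal_lt_top).ne
    filter_upwards [this] with y hy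
    refine (hD0 y).lt_of_ne fun h0 => ?_
    obtain ⟨M, hM⟩ := ENNReal.exists_nat_gt hy.ne
    have h1 : F M y ≤ ⨆ M, F M y := le_iSup (fun M => F M y) M
    have h2 : F M y = ENNReal.ofReal (Real.log C + M) := by
      simp only [F, φ, ← h0]
      rw [max_eq_right (Real.exp_pos _).le, Real.log_exp, sub_neg_eq_add]
    have h3 : (M : ℝ≥0∞) ≤ F M y := by
      rw [h2, ← ENNReal.ofReal_natCast]
      exact ENNReal.ofReal_le_ofReal (by linarith [Real.log_nonneg hC1])
    exact absurd (h3.trans h1) (not_le.2 hM)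
  have hevent : ∀ᵐ y ∂μ, Tendsto (fun M => φ M y) atTop (𝓝 (Real.log (D y))) := by
    filter_upwards [hDpos] with y hy
    refine tendsto_const_nhds.congr' ?_
    obtain ⟨M₀, hM₀⟩ := exists_nat_ge (-Real.log (D y))
    filter_upwards [eventually_ge_atTop M₀] with M hM
    have : (M₀ : ℝ) ≤ M := Nat.cast_le.2 hM
    simp only [φ]
    rw [max_eq_left]
    rw [← Real.le_log_iff_exp_le hy]
    linarith
  have hlogle : ∀ᵐ y ∂μ, ∀ M, Real.log (D y) ≤ φ M y := by
    filter_upwards [hDpos] with y hy M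
    exact Real.log_le_log hy (le_max_left _ _)
  have hlogm : Measurable fun y => Real.log (D y) := Real.measurable_log.comp hD.measurable
  have hlogint : Integrable (fun y => Real.log (D y)) μ := by
    have h1 : Integrable (fun y => Real.log C - Real.log (D y)) μ := by
      refine ⟨(measurable_const.sub hlogm).aestronglyMeasurable, ?_⟩
      rw [hasFiniteIntegral_iff_ofReal]
      · refine lt_of_le_of_lt (lintegral_mono_ae ?_) (hsup.trans_lt ENNReal.ofReal_lt_top)
        filter_upwards [hevent] with y hy
        refine le_of_tendsto ((ENNReal.tendsto_ofReal (hy.const_sub (Real.log C))))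
          (Eventually.of_forall fun M => le_iSup (fun M => F M y) M)
      · filter_upwards [hDpos] with y hy
        exact sub_nonneg.2 (Real.log_le_log hy (hC y))
    exact ((integrable_const (Real.log C)).sub h1).congr (Eventually.of_forall fun y => by simp)
  refine ge_of_tendsto' (tendsto_integral_of_dominated_convergence
    (fun y => |Real.log (D y)| + |Real.log C|) (fun M => (hφc M).aestronglyMeasurable)
    (hlogint.abs.add (integrable_const _)) (fun M => ?_) hevent) hcφ
  filter_upwards [hlogle] with y hy
  rw [Real.norm_eq_abs, abs_le]
  constructor
  · linarith [hy M, neg_abs_le (Real.log (D y)), abs_nonneg (Real.log C)]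
  · linarith [hφC M y, le_abs_self (Real.log C), abs_nonneg (Real.log (D y))]

end Empirical

/-! ### Geometry of the chordal metric -/

namespace RSphere

lemma dist_sq_eq (x y : RSphere) : dist x y ^ 2 =
    dist (embed x).fst (embed y).fst ^ 2 + dist (embed x).snd (embed y).snd ^ 2 := by
  change dist (embed x) (embed y) ^ 2 = _
  rw [WithLp.prod_dist_eq_of_L2, Real.sq_sqrt (by positivity)]

@[simp] lemma embed_infty_fst : (embed infty).fst = 0 := rfl

@[simp] lemma embed_infty_snd : (embed infty).snd = 1 := rfl

lemma embed_ofC_fst (z : ℂ) : (embed (ofC z)).fst = ((2 / (‖z‖ ^ 2 + 1)) : ℝ) • z := rfl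

lemma embed_ofC_snd (z : ℂ) : (embed (ofC z)).snd = (‖z‖ ^ 2 - 1) / (‖z‖ ^ 2 + 1) := rfl

lemma eq_infty_or_exists_ofC (x : RSphere) : x = infty ∨ ∃ z, x = ofC z := by
  obtain ⟨_ | z⟩ := x
  · exact Or.inl rfl
  · exact Or.inr ⟨z, rfl⟩

@[simp] lemma toC_ofC (z : ℂ) : toC (ofC z) = z := rfl

@[simp] lemma toC_infty : toC infty = 0 := rfl

@[simp] lemma inv_infty : inv infty = ofC 0 := rfl

@[simp] lemma inv_ofC_zero : inv (ofC 0) = infty := by simp [inv, elim, ofC]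

lemma inv_ofC {z : ℂ} (hz : z ≠ 0) : inv (ofC z) = ofC z⁻¹ := by simp [inv, elim, ofC, hz]

lemma ofC_ne_infty (z : ℂ) : ofC z ≠ infty := by simp [ofC, infty]

lemma ofC_injective : Function.Injective ofC := Function.LeftInverse.injective toC_ofC

lemma ofC_toC {x : RSphere} (hx : x ≠ infty) : ofC (toC x) = x := by
  obtain rfl | ⟨z, rfl⟩ := x.eq_infty_or_exists_ofC
  · exact absurd rfl hx
  · rfl

/-- The conformal factor of the stereographic chart. -/
noncomputable def chartFactor (z w : ℂ) : ℝ := 2 / (√(‖z‖ ^ 2 + 1) * √(‖w‖ ^ 2 + 1))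

lemma chartFactor_pos (z w : ℂ) : 0 < chartFactor z w := by
  unfold chartFactor; positivity

lemma continuous_chartFactor : Continuous fun p : ℂ × ℂ => chartFactor p.1 p.2 := by
  unfold chartFactor
  refine continuous_const.div (by fun_prop) fun p => ?_
  positivity

lemma dist_ofC_ofC (z w : ℂ) : dist (ofC z) (ofC w) = chartFactor z w * dist z w := by
  have hk := (chartFactor_pos z w).le
  rw [← sq_eq_sq₀ dist_nonneg (by positivity), dist_sq_eq, embed_ofC_fst, embed_ofC_snd,
    embed_ofC_fst, embed_ofC_snd, chartFactor,
    mul_pow, div_pow, mul_pow, Real.sq_sqrt (by positivity), Real.sq_sqrt (by positivity)]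
  simp only [dist_eq_norm, Real.norm_eq_abs, sq_abs]
  have hz : ‖z‖ ^ 2 = z.re ^ 2 + z.im ^ 2 := by rw [Complex.sq_norm, Complex.normSq_apply]; ring
  have hw : ‖w‖ ^ 2 = w.re ^ 2 + w.im ^ 2 := by rw [Complex.sq_norm, Complex.normSq_apply]; ring
  have h1 : z.re ^ 2 + z.im ^ 2 + 1 ≠ 0 := by positivity
  have h2 : w.re ^ 2 + w.im ^ 2 + 1 ≠ 0 := by positivity
  rw [hz, hw, Complex.sq_norm, Complex.normSq_apply, Complex.sq_norm, Complex.normSq_apply]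
  simp only [Complex.sub_re, Complex.sub_im, Complex.real_smul, Complex.mul_re, Complex.mul_im,
    Complex.ofReal_re, Complex.ofReal_im, zero_mul, sub_zero, add_zero]
  field_simp
  ring

lemma hasConfDeriv_ofC (z : ℂ) : HasConfDeriv ofC (chartFactor z z) z := by
  intro ε hε
  have h := Metric.tendsto_nhds.1 (continuous_chartFactor.tendsto (z, z)) ε hε
  filter_upwards [h] with p hp
  rw [dist_ofC_ofC, ← sub_mul, abs_mul, abs_of_nonneg (dist_nonneg (x := p.1))]
  rw [Real.dist_eq] at hp
  gcongr

lemma continuous_ofC : Continuous ofC :=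
  continuous_iff_continuousAt.2 fun z => (hasConfDeriv_ofC z).continuousAt

lemma isometry_embed : Isometry embed := Isometry.of_dist_eq fun _ _ => rfl

lemma continuousAt_toC (z : ℂ) : ContinuousAt toC (ofC z) := by
  have h1 : toC = fun x => (1 - (embed x).snd)⁻¹ • (embed x).fst := by
    funext x
    obtain rfl | ⟨w, rfl⟩ := x.eq_infty_or_exists_ofC
    · simp
    · have h2 : 1 - (‖w‖ ^ 2 - 1) / (‖w‖ ^ 2 + 1) = 2 / (‖w‖ ^ 2 + 1) := by
        field_simp
        ring
      simp only [toC_ofC, embed_ofC_fst, embed_ofC_snd, h2, smul_smul]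
      rw [inv_mul_cancel₀ (by positivity), one_smul]
  rw [h1]
  have hs : Continuous fun x => (embed x).snd :=
    (WithLp.continuous_snd _ _ _).comp isometry_embed.continuous
  have hf : Continuous fun x => (embed x).fst :=
    (WithLp.continuous_fst _ _ _).comp isometry_embed.continuous
  refine ((continuousAt_const.sub hs.continuousAt).inv₀ ?_).smul hf.continuousAt
  change 1 - (embed (ofC z)).snd ≠ 0
  rw [embed_ofC_snd]
  have h3 : (0 : ℝ) < ‖z‖ ^ 2 + 1 := by positivity
  simp only [sub_ne_zero]
  intro h
  rw [eq_comm, div_eq_one_iff_eq h3.ne'] at h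
  linarith

lemma hasConfDeriv_toC (z : ℂ) : HasConfDeriv toC (chartFactor z z)⁻¹ (ofC z) := by
  intro ε hε
  have hc : ContinuousAt (fun p : RSphere × RSphere => (chartFactor (toC p.1) (toC p.2))⁻¹)
      (ofC z, ofC z) := by
    refine ContinuousAt.inv₀ ?_ (chartFactor_pos _ _).ne'
    refine (continuous_chartFactor.continuousAt (x := (z, z))).comp
      (f := fun p : RSphere × RSphere => (toC p.1, toC p.2)) (x := (ofC z, ofC z)) ?_
    exact (ContinuousAt.comp (f := Prod.fst) (g := toC) (x := (ofC z, ofC z)) (continuousAt_toC z)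
      continuousAt_fst).prodMk
      (ContinuousAt.comp (f := Prod.snd) (g := toC) (x := (ofC z, ofC z))
      (continuousAt_toC z) continuousAt_snd)
  have h := Metric.tendsto_nhds.1 hc ε hε
  have hne : ∀ᶠ x in 𝓝 (ofC z), x ≠ infty := isOpen_ne.mem_nhds (ofC_ne_infty z)
  have hne2 := hne.prod_nhds hne
  filter_upwards [h, hne2] with p hp hpne
  have h1 : dist (toC p.1) (toC p.2) = (chartFactor (toC p.1) (toC p.2))⁻¹ * dist p.1 p.2 := by
    rw [eq_inv_mul_iff_mul_eq₀ (chartFactor_pos _ _).ne', ← dist_ofC_ofC, ofC_toC hpne.1,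
      ofC_toC hpne.2]
  rw [h1, ← sub_mul, abs_mul, abs_of_nonneg (dist_nonneg (x := p.1))]
  rw [Real.dist_eq] at hp
  gcongr
  exact hp.le

lemma embed_inv_fst (x : RSphere) :
    (embed (inv x)).fst = (starRingEnd ℂ) (embed x).fst := by
  obtain rfl | ⟨z, rfl⟩ := x.eq_infty_or_exists_ofC
  · simp [embed_ofC_fst]
  by_cases hz : z = 0
  · subst hz; simp [embed_ofC_fst]
  have hn : ‖z‖ ≠ 0 := norm_ne_zero_iff.2 hz
  have h1 : (starRingEnd ℂ) z = ((‖z‖ ^ 2 : ℝ) : ℂ) * z⁻¹ := by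
    rw [eq_mul_inv_iff_mul_eq₀ hz, mul_comm, Complex.mul_conj, Complex.normSq_eq_norm_sq]
  rw [inv_ofC hz, embed_ofC_fst, embed_ofC_fst]
  simp only [Complex.real_smul, map_mul, Complex.conj_ofReal, h1, ← mul_assoc,
    ← Complex.ofReal_mul, norm_inv]
  congr 2
  field_simp
  ring

lemma embed_inv_snd (x : RSphere) : (embed (inv x)).snd = -(embed x).snd := by
  obtain rfl | ⟨z, rfl⟩ := x.eq_infty_or_exists_ofC
  · simp [embed_ofC_snd]
  by_cases hz : z = 0
  · subst hz; simp [embed_ofC_snd]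
  have hn : ‖z‖ ≠ 0 := norm_ne_zero_iff.2 hz
  rw [inv_ofC hz, embed_ofC_snd, embed_ofC_snd, norm_inv]
  field_simp
  ring

lemma isometry_inv : Isometry inv := by
  refine Isometry.of_dist_eq fun x y => ?_
  rw [← sq_eq_sq₀ dist_nonneg dist_nonneg, dist_sq_eq, dist_sq_eq, embed_inv_fst, embed_inv_fst,
    embed_inv_snd, embed_inv_snd]
  simp only [dist_eq_norm, ← map_sub, RCLike.norm_conj]
  rw [← neg_sub', norm_neg]

@[simp] lemma inv_inv (x : RSphere) : inv (inv x) = x := by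
  rw [← dist_eq_zero, ← sq_eq_zero_iff, dist_sq_eq]
  simp [embed_inv_fst, embed_inv_snd]

instance : CompactSpace RSphere := by
  have hc : IsCompact (ofC '' closedBall 0 1) :=
    (isCompact_closedBall 0 1).image continuous_ofC
  refine ⟨(hc.union (hc.image isometry_inv.continuous)).of_isClosed_subset isClosed_univ ?_⟩
  intro x _
  obtain rfl | ⟨z, rfl⟩ := x.eq_infty_or_exists_ofC
  · exact Or.inr ⟨ofC 0, ⟨0, by simp, rfl⟩, inv_ofC_zero⟩
  obtain h | h := le_total ‖z‖ 1
  · exact Or.inl ⟨z, by simpa using h, rfl⟩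
  · have hz : z ≠ 0 := norm_pos_iff.1 (zero_lt_one.trans_le h)
    refine Or.inr ⟨ofC z⁻¹, ⟨z⁻¹, ?_, rfl⟩, ?_⟩
    · simpa using inv_le_one_of_one_le₀ h
    · rw [inv_ofC (inv_ne_zero hz), _root_.inv_inv]

instance neBot_nhdsNE (x : RSphere) : (𝓝[≠] x).NeBot := by
  have key : ∀ z : ℂ, (𝓝[≠] (ofC z)).NeBot := fun z =>
    have : Tendsto ofC (𝓝[≠] z) (𝓝[≠] (ofC z)) := continuous_ofC.continuousAt.tendsto.inf
      (tendsto_principal_principal.2 fun w hw => ofC_injective.ne hw)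
    this.neBot
  obtain rfl | ⟨z, rfl⟩ := x.eq_infty_or_exists_ofC
  · have h := key 0
    have : Tendsto inv (𝓝[≠] (ofC 0)) (𝓝[≠] infty) := by
      rw [← inv_ofC_zero]
      exact isometry_inv.continuous.continuousAt.tendsto.inf
        (tendsto_principal_principal.2 fun w hw => isometry_inv.injective.ne hw)
    exact this.neBot
  · exact key z

end RSphere

/-! ### Conformality of rational maps -/

open RSphere

lemma exists_hasConfDeriv_of_ne_infty {F : RSphere → RSphere} (hF : Continuous F) {a : ℂ}
    {g : ℂ → ℂ} (hg : ∀ᶠ z in 𝓝[≠] a, DifferentiableAt ℂ g z)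
    (hFg : ∀ᶠ z in 𝓝[≠] a, F (ofC z) = ofC (g z)) (hFa : F (ofC a) ≠ infty) :
    ∃ D, HasConfDeriv F D (ofC a) := by
  let h : ℂ → ℂ := fun z => toC (F (ofC z))
  have hFc : ContinuousAt (fun z => F (ofC z)) a := (hF.comp continuous_ofC).continuousAt
  have hh : ContinuousAt h a := by
    refine ContinuousAt.comp (g := toC) ?_ hFc
    rw [← ofC_toC hFa]
    exact continuousAt_toC _
  have hd : ∀ᶠ z in 𝓝[≠] a, DifferentiableAt ℂ h z := by
    have h1 : ∀ᶠ z in 𝓝[≠] a, h =ᶠ[𝓝 z] g := by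
      have := eventually_eventually_nhdsWithin.2 hFg
      filter_upwards [this, self_mem_nhdsWithin] with z hz hza
      rw [isOpen_compl_singleton.nhdsWithin_eq hza] at hz
      filter_upwards [hz] with w hw
      simp only [h, hw, toC_ofC]
    filter_upwards [h1, hg] with z hz hgz
    exact hz.differentiableAt_iff.2 hgz
  have han := Complex.analyticAt_of_differentiable_on_punctured_nhds_of_continuousAt hd hh
  have h1 := HasConfDeriv.of_hasStrictDerivAt han.hasStrictDerivAt
  have h2 := ((hasConfDeriv_ofC (h a)).comp h1).comp (f := toC) (x := ofC a) (hasConfDeriv_toC a)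
  refine ⟨_, h2.congr ?_⟩
  filter_upwards [isOpen_ne.mem_nhds (ofC_ne_infty a),
    hF.continuousAt.eventually (isOpen_ne.mem_nhds hFa)] with x hx hFx
  simp only [h]
  rw [ofC_toC hx, ofC_toC hFx]

lemma exists_hasConfDeriv_of_differentiable {F : RSphere → RSphere} (hF : Continuous F) {a : ℂ}
    {g : ℂ → ℂ} (hg : ∀ᶠ z in 𝓝[≠] a, DifferentiableAt ℂ g z)
    (hFg : ∀ᶠ z in 𝓝[≠] a, F (ofC z) = ofC (g z)) : ∃ D, HasConfDeriv F D (ofC a) := by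
  by_cases hFa : F (ofC a) = infty
  · have h0 : ∀ᶠ z in 𝓝[≠] a, g z ≠ 0 := by
      have h1 : ∀ᶠ z in 𝓝 a, F (ofC z) ≠ ofC 0 :=
        (hF.comp continuous_ofC).continuousAt.eventually
          (isOpen_ne.mem_nhds (by simpa [hFa] using (ofC_ne_infty 0).symm))
      filter_upwards [nhdsWithin_le_nhds h1, hFg] with z hz hz' h0
      exact hz (by rw [hz', h0])
    obtain ⟨D, hD⟩ := exists_hasConfDeriv_of_ne_infty (F := fun x => RSphere.inv (F x))
      (isometry_inv.continuous.comp hF) (g := fun z => (g z)⁻¹) (a := a)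
      (by filter_upwards [hg, h0] with z hz hz0 using hz.inv hz0)
      (by filter_upwards [hFg, h0] with z hz hz0; rw [hz, inv_ofC hz0])
      (by rw [hFa, inv_infty]; exact ofC_ne_infty 0)
    have h2 := (HasConfDeriv.of_isometry isometry_inv _).comp hD
    exact ⟨_, by simpa only [RSphere.inv_inv] using h2⟩
  · exact exists_hasConfDeriv_of_ne_infty hF hg hFg hFa

namespace IsRationalMap

variable {f : RSphere → RSphere} {p q : Polynomial ℂ}

lemma denom_ne_zero (hf : IsRationalMap f p q) (hdeg : 2 ≤ ratDeg p q) : q ≠ 0 := by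
  rintro rfl
  have h := isCoprime_zero_right.1 hf.coprime
  have := Polynomial.natDegree_eq_zero_of_isUnit h
  simp [ratDeg, this] at hdeg

lemma exists_hasConfDeriv (hf : IsRationalMap f p q) (hdeg : 2 ≤ ratDeg p q) (x : RSphere) :
    ∃ D, HasConfDeriv f D x := by
  have hq := hf.denom_ne_zero hdeg
  have hfin : {z | q.eval z = 0}.Finite := Polynomial.finite_setOfPred_isRoot hq
  obtain rfl | ⟨a, rfl⟩ := x.eq_infty_or_exists_ofC
  · have hev : ∀ᶠ z : ℂ in 𝓝[≠] 0, q.eval z⁻¹ ≠ 0 :=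
      Filter.tendsto_inv₀_nhdsNE_zero.eventually (Bornology.isBounded_def.1 hfin.isBounded)
    obtain ⟨D, hD⟩ := exists_hasConfDeriv_of_differentiable
      (F := fun x => f (RSphere.inv x)) (hf.continuous.comp isometry_inv.continuous) (a := 0)
      (g := fun z => p.eval z⁻¹ / q.eval z⁻¹)
      (by
        filter_upwards [hev, self_mem_nhdsWithin] with z hz hz0
        have hi : DifferentiableAt ℂ (fun z : ℂ => z⁻¹) z := differentiableAt_inv hz0
        exact ((p.differentiableAt).comp z hi).div ((q.differentiableAt).comp z hi) hz)
      (by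
        filter_upwards [hev, self_mem_nhdsWithin] with z hz hz0
        rw [inv_ofC hz0, hf.eval _ hz])
    have h2 := HasConfDeriv.comp (f := RSphere.inv) (x := infty) hD
      (HasConfDeriv.of_isometry isometry_inv _)
    exact ⟨_, by simpa only [RSphere.inv_inv] using h2⟩
  · have hev : ∀ᶠ z in 𝓝[≠] a, q.eval z ≠ 0 := by
      have h1 : ({z | q.eval z = 0} \ {a})ᶜ ∈ 𝓝 a :=
        (hfin.subset sdiff_subset).isClosed.isOpen_compl.mem_nhds (by simp)
      filter_upwards [nhdsWithin_le_nhds h1, self_mem_nhdsWithin] with z hz hza h0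
      exact hz ⟨h0, hza⟩
    refine exists_hasConfDeriv_of_differentiable hf.continuous (a := a)
      (g := fun z => p.eval z / q.eval z) ?_ ?_
    · filter_upwards [hev] with z hz
      exact p.differentiableAt.div q.differentiableAt hz
    · filter_upwards [hev] with z hz
      exact hf.eval z hz

lemma hasConfDeriv (hf : IsRationalMap f p q) (hdeg : 2 ≤ ratDeg p q) (x : RSphere) :
    HasConfDeriv f (sphDeriv f x) x := by
  obtain ⟨D, hD⟩ := hf.exists_hasConfDeriv hdeg x
  have : sphDeriv f x = D := hD.tendsto_ratio.limsup_eq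
  rwa [this]

lemma sphDeriv_iterate (hf : IsRationalMap f p q) (hdeg : 2 ≤ ratDeg p q) (n : ℕ)
    (x : RSphere) : sphDeriv f^[n] x = ∏ i ∈ Finset.range n, sphDeriv f (f^[i] x) :=
  (HasConfDeriv.iterate (hf.hasConfDeriv hdeg) n x).tendsto_ratio.limsup_eq

end IsRationalMap

/-! ### Julia sets and extremal exponents -/

lemma isClosed_juliaSet (f : RSphere → RSphere) : IsClosed (juliaSet f) := by
  refine isClosed_compl_iff.2 (isOpen_iff_forall_mem_open.2 ?_)
  rintro x ⟨U, hU, hxU, hE⟩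
  exact ⟨U, fun y hy => ⟨U, hU, hy, hE⟩, hU, hxU⟩

lemma mapsTo_juliaSet {f : RSphere → RSphere} (hf : Continuous f) :
    MapsTo f (juliaSet f) (juliaSet f) := by
  rintro x hx ⟨U, hU, hxU, hE⟩
  refine hx ⟨f ⁻¹' U, hU.preimage hf, hxU, fun y hy V hV => ?_⟩
  have h1 : ∀ᶠ z in 𝓝[f ⁻¹' U] y, ∀ n : ℕ, (f^[n] (f y), f^[n] (f z)) ∈ V := by
    have : Tendsto f (𝓝[f ⁻¹' U] y) (𝓝[U] (f y)) :=
      hf.continuousWithinAt.tendsto_nhdsWithin (mapsTo_preimage f U)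
    exact this.eventually (hE (f y) hy V hV)
  have h0 : ∀ᶠ z in 𝓝[f ⁻¹' U] y, (y, z) ∈ V := nhdsWithin_le_nhds (mem_nhds_left y hV)
  filter_upwards [h0, h1] with z hz0 hz n
  cases n with
  | zero => exact hz0
  | succ n => exact hz n

lemma exists_nonneg_forall_log_le {X : Type*} [TopologicalSpace X] [CompactSpace X] {D : X → ℝ}
    (hD : Continuous D) (hD0 : ∀ x, 0 ≤ D x) : ∃ K, 0 ≤ K ∧ ∀ x, Real.log (D x) ≤ K := by
  obtain ⟨C, hC⟩ := (isCompact_range hD).bddAbove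
  refine ⟨Real.log (max C 1), Real.log_nonneg (le_max_right _ _), fun x => ?_⟩
  obtain h | h := (hD0 x).eq_or_lt
  · rw [← h, Real.log_zero]
    exact Real.log_nonneg (le_max_right _ _)
  · exact Real.log_le_log h ((hC ⟨x, rfl⟩).trans (le_max_left _ _))

lemma integral_le_of_forall_le {X : Type*} [MeasurableSpace X] (μ : Measure X)
    [IsProbabilityMeasure μ] {g : X → ℝ} {K : ℝ} (hK : 0 ≤ K) (hg : ∀ᵐ x ∂μ, g x ≤ K) :
    ∫ x, g x ∂μ ≤ K := by
  by_cases hi : Integrable g μ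
  · simpa using integral_mono_ae hi (integrable_const K) hg
  · rwa [integral_undef hi]

lemma exp_mul_le_of_lt_log_div {c d : ℝ} {n : ℕ} (hc : 0 < c) (hd : 0 ≤ d) (hn : 0 < n)
    (h : c < Real.log d / n) : Real.exp (c * n) ≤ d := by
  have hn' : (0 : ℝ) < n := Nat.cast_pos.2 hn
  rw [lt_div_iff₀ hn'] at h
  have hd' : 0 < d := hd.lt_of_ne fun h0 => by
    rw [← h0, Real.log_zero] at h
    exact absurd h (by positivity : 0 < c * n).not_gt
  exact (Real.le_log_iff_exp_le hd').1 h.le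

namespace IsRationalMap

variable {f : RSphere → RSphere} {p q : Polynomial ℂ}

lemma sphDeriv_nonneg (hf : IsRationalMap f p q) (hdeg : 2 ≤ ratDeg p q) (x : RSphere) :
    0 ≤ sphDeriv f x :=
  (hf.hasConfDeriv hdeg x).nonneg

lemma continuous_sphDeriv (hf : IsRationalMap f p q) (hdeg : 2 ≤ ratDeg p q) :
    Continuous (sphDeriv f) :=
  HasConfDeriv.continuous_deriv (hf.hasConfDeriv hdeg)

lemma le_alphaPlusMeas (hf : IsRationalMap f p q) (hdeg : 2 ≤ ratDeg p q) {c : ℝ}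
    (h : ∀ N : ℕ, ∃ n ≥ N, ∃ x ∈ juliaSet f,
      Real.exp (c * n) ≤ ∏ i ∈ Finset.range n, sphDeriv f (f^[i] x)) :
    c ≤ alphaPlusMeas f := by
  obtain ⟨μ, hμ, hinv, hμJ, hc⟩ := exists_invariant_le_integral_log hf.continuous
    (isClosed_juliaSet f) (mapsTo_juliaSet hf.continuous) (hf.continuous_sphDeriv hdeg)
    (hf.sphDeriv_nonneg hdeg) h
  refine hc.trans (le_csSup ?_ ⟨μ, hμ, hinv, hμJ, rfl⟩)
  obtain ⟨K, hK0, hK⟩ := exists_nonneg_forall_log_le (hf.continuous_sphDeriv hdeg)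
    (hf.sphDeriv_nonneg hdeg)
  refine ⟨K, ?_⟩
  rintro _ ⟨ν, hν, -, -, rfl⟩
  exact integral_le_of_forall_le ν hK0 (Eventually.of_forall hK)

lemma alphaPlusMeas_nonneg (hf : IsRationalMap f p q) (hdeg : 2 ≤ ratDeg p q)
    (hJ : (juliaSet f).Nonempty) : 0 ≤ alphaPlusMeas f := by
  refine hf.le_alphaPlusMeas hdeg fun N => ?_
  by_contra! h
  obtain ⟨x, hx⟩ := hJ
  refine hx (exists_equicontinuousOn_of_confDeriv_lt_one hf.continuous (isClosed_juliaSet f)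
    (mapsTo_juliaSet hf.continuous) (N := N + 1) N.succ_pos
    (fun y _ => HasConfDeriv.iterate (hf.hasConfDeriv hdeg) (N + 1) y) (fun y hy => ?_) hx)
  simpa using h (N + 1) N.le_succ y hy

lemma lyapUpper_le_alphaPlusMeas (hf : IsRationalMap f p q) (hdeg : 2 ≤ ratDeg p q)
    {x : RSphere} (hx : x ∈ juliaSet f) : lyapUpper f x ≤ alphaPlusMeas f := by
  by_contra! hlt
  obtain ⟨c, hc1, hc2⟩ := EReal.lt_iff_exists_real_btwn.1 hlt
  have hc : alphaPlusMeas f < c := EReal.coe_lt_coe_iff.1 hc1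
  have hc0 : 0 < c := (hf.alphaPlusMeas_nonneg hdeg ⟨x, hx⟩).trans_lt hc
  refine hc.not_ge (hf.le_alphaPlusMeas hdeg fun N => ?_)
  obtain ⟨n, hcn, hn⟩ := ((frequently_lt_of_lt_limsup (by isBoundedDefault) hc2).and_eventually
    (eventually_ge_atTop (N + 1))).exists
  replace hcn := EReal.coe_lt_coe_iff.1 hcn
  refine ⟨n, by omega, x, hx, ?_⟩
  rw [hf.sphDeriv_iterate hdeg] at hcn
  exact exp_mul_le_of_lt_log_div hc0
    (Finset.prod_nonneg fun i _ => hf.sphDeriv_nonneg hdeg _) (by omega) hcn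

lemma exists_pos_forall_le_sphDeriv (hf : IsRationalMap f p q) (hdeg : 2 ≤ ratDeg p q)
    (hcrit : juliaSet f ∩ critSet f = ∅) : ∃ m, 0 < m ∧ ∀ x ∈ juliaSet f, m ≤ sphDeriv f x := by
  obtain hJ | hJ := (juliaSet f).eq_empty_or_nonempty
  · exact ⟨1, one_pos, by simp [hJ]⟩
  obtain ⟨y, hy, hmin⟩ := (isClosed_juliaSet f).isCompact.exists_isMinOn hJ
    (hf.continuous_sphDeriv hdeg).continuousOn
  refine ⟨sphDeriv f y, (hf.sphDeriv_nonneg hdeg y).lt_of_ne fun h0 => ?_, fun x hx => hmin hx⟩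
  exact (hcrit ▸ (⟨hy, h0.symm⟩ : y ∈ juliaSet f ∩ critSet f) : y ∈ (∅ : Set RSphere))

lemma alphaMinusMeas_le (hf : IsRationalMap f p q) (hdeg : 2 ≤ ratDeg p q)
    (hcrit : juliaSet f ∩ critSet f = ∅) {c : ℝ}
    (h : ∀ N : ℕ, ∃ n ≥ N, ∃ x ∈ juliaSet f,
      ∏ i ∈ Finset.range n, sphDeriv f (f^[i] x) ≤ Real.exp (c * n)) :
    alphaMinusMeas f ≤ c := by
  obtain ⟨m, hm, hmJ⟩ := hf.exists_pos_forall_le_sphDeriv hdeg hcrit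
  have hmaps := mapsTo_juliaSet hf.continuous
  have hpos : ∀ x, 0 < max (sphDeriv f x) m := fun x => lt_max_of_lt_right hm
  obtain ⟨μ, hμ, hinv, hμJ, hc⟩ := exists_invariant_le_integral_log (c := -c) hf.continuous
    (isClosed_juliaSet f) hmaps (D := fun x => (max (sphDeriv f x) m)⁻¹)
    (((hf.continuous_sphDeriv hdeg).max continuous_const).inv₀ fun x => (hpos x).ne')
    (fun x => (inv_pos.2 (hpos x)).le) (fun N => by
      obtain ⟨n, hn, x, hx, hprod⟩ := h N
      refine ⟨n, hn, x, hx, ?_⟩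
      rw [Finset.prod_inv_distrib, neg_mul, Real.exp_neg]
      have heq : ∏ i ∈ Finset.range n, max (sphDeriv f (f^[i] x)) m =
          ∏ i ∈ Finset.range n, sphDeriv f (f^[i] x) :=
        Finset.prod_congr rfl fun i _ => max_eq_left (hmJ _ (hmaps.iterate i hx))
      exact inv_anti₀ (Finset.prod_pos fun i _ => hpos _) (heq.trans_le hprod))
  have hJae : ∀ ν : Measure RSphere, ν (juliaSet f)ᶜ = 0 → ∀ᵐ x ∂ν, x ∈ juliaSet f :=
    fun ν hν => mem_ae_iff.2 hν
  have hle : lyapMeas f μ ≤ c := by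
    have heq : ∫ x, Real.log (max (sphDeriv f x) m)⁻¹ ∂μ = -lyapMeas f μ := by
      rw [lyapMeas, ← integral_neg]
      refine integral_congr_ae ?_
      filter_upwards [hJae μ hμJ] with x hx
      rw [max_eq_left (hmJ x hx), Real.log_inv]
    linarith
  refine le_trans (csInf_le ?_ ⟨μ, hμ, hinv, hμJ, rfl⟩) hle
  refine ⟨-|Real.log m|, ?_⟩
  rintro _ ⟨ν, hν, -, hνJ, rfl⟩
  rw [neg_le, lyapMeas, ← integral_neg]
  refine integral_le_of_forall_le ν (abs_nonneg _) ?_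
  filter_upwards [hJae ν hνJ] with x hx
  linarith [Real.log_le_log hm (hmJ x hx), neg_abs_le (Real.log m)]

lemma alphaMinusMeas_le_lyapLower (hf : IsRationalMap f p q) (hdeg : 2 ≤ ratDeg p q)
    (hcrit : juliaSet f ∩ critSet f = ∅) {x : RSphere} (hx : x ∈ juliaSet f) :
    alphaMinusMeas f ≤ lyapLower f x := by
  by_contra! hlt
  obtain ⟨c, hc1, hc2⟩ := EReal.lt_iff_exists_real_btwn.1 hlt
  refine (EReal.coe_lt_coe_iff.1 hc2).not_ge (hf.alphaMinusMeas_le hdeg hcrit fun N => ?_)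
  obtain ⟨m, hm, hmJ⟩ := hf.exists_pos_forall_le_sphDeriv hdeg hcrit
  obtain ⟨n, hcn, hn⟩ := ((frequently_lt_of_liminf_lt (by isBoundedDefault) hc1).and_eventually
    (eventually_ge_atTop (N + 1))).exists
  replace hcn := EReal.coe_lt_coe_iff.1 hcn
  refine ⟨n, by omega, x, hx, ?_⟩
  have hn' : (0 : ℝ) < n := Nat.cast_pos.2 (by omega)
  rw [hf.sphDeriv_iterate hdeg, div_lt_iff₀ hn'] at hcn
  refine (Real.log_le_iff_le_exp (Finset.prod_pos fun i _ => ?_)).1 hcn.le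
  exact hm.trans_le (hmJ _ ((mapsTo_juliaSet hf.continuous).iterate i hx))

end IsRationalMap

/-- **Lemma (completeness bounds for the exponents).**
For a rational map `f` of degree `≥ 2`, no point of `J` has upper Lyapunov exponent
above `α⁺`; if moreover `J` contains no critical point, no point of `J` has lower
Lyapunov exponent below `α⁻`. Here `α^±` are the extremal Lyapunov exponents of
invariant probability measures on `J`. -/
theorem no_exponents_beyond_extremes (f : RSphere → RSphere) (p q : Polynomial ℂ)
    (hf : IsRationalMap f p q) (hdeg : 2 ≤ ratDeg p q) :
    {x | x ∈ juliaSet f ∧ (alphaPlusMeas f : EReal) < lyapUpper f x} = ∅ ∧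
    (juliaSet f ∩ critSet f = ∅ →
      {x | x ∈ juliaSet f ∧ lyapLower f x < (alphaMinusMeas f : EReal)} = ∅) := by
  refine ⟨eq_empty_of_forall_notMem ?_, fun hcrit => eq_empty_of_forall_notMem ?_⟩
  · rintro x ⟨hx, hlt⟩
    exact hlt.not_ge (hf.lyapUpper_le_alphaPlusMeas hdeg hx)
  · rintro x ⟨hx, hlt⟩
    exact hlt.not_ge (hf.alphaMinusMeas_le_lyapLower hdeg hcrit hx)
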